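/- The monoid algebra k[W(X,Ω)] is the free Ω-operated unital k-algebra on X. Precisely: for every associative unital k-algebra A, every family of k-linear maps β_ω : A → A (ω ∈ Ω), and every map f : X → A, there exists a unique k-algebra homomorphism φ : k[W(X,Ω)] → A such that φ(x) = f(x) for every x ∈ X and φ(P_ω(w)) = β_ω(φ(w)) for every w ∈ W(X,Ω) and every ω ∈ Ω (where elements of W(X,Ω) are viewed as basis elements of k[W(X,Ω)]). -/

import Mathlib

/-- The left bracket letter `⌊_ω` as a one-letter word. -/
def lbr {X Ω : Type*} (ω : Ω) : FreeMonoid (X ⊕ (Ω ⊕ Ω)) :=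
  FreeMonoid.of (Sum.inr (Sum.inl ω))

/-- The right bracket letter `⌋_ω` as a one-letter word. -/
def rbr {X Ω : Type*} (ω : Ω) : FreeMonoid (X ⊕ (Ω ⊕ Ω)) :=
  FreeMonoid.of (Sum.inr (Sum.inr ω))

/-- The operator `P_ω` on the free monoid: `P_ω w = ⌊_ω w ⌋_ω`. -/
def Pop {X Ω : Type*} (ω : Ω) (w : FreeMonoid (X ⊕ (Ω ⊕ Ω))) : FreeMonoid (X ⊕ (Ω ⊕ Ω)) :=
  lbr ω * w * rbr ω

/-- `(X,Ω)`-decorated Motzkin words. -/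
inductive IsMW (X Ω : Type*) : FreeMonoid (X ⊕ (Ω ⊕ Ω)) → Prop
  | one : IsMW X Ω 1
  | letter (x : X) : IsMW X Ω (FreeMonoid.of (Sum.inl x))
  | mul {u v : FreeMonoid (X ⊕ (Ω ⊕ Ω))} : IsMW X Ω u → IsMW X Ω v → IsMW X Ω (u * v)
  | op (ω : Ω) {u : FreeMonoid (X ⊕ (Ω ⊕ Ω))} : IsMW X Ω u → IsMW X Ω (Pop ω u)

/-- `W(X,Ω)` as a submonoid of the free monoid. -/
def MWsub (X Ω : Type*) : Submonoid (FreeMonoid (X ⊕ (Ω ⊕ Ω))) where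
  carrier := {w | IsMW X Ω w}
  one_mem' := IsMW.one
  mul_mem' := fun h1 h2 => IsMW.mul h1 h2

/-- The operator `P_ω` restricted to `W(X,Ω)`. -/
def PopSub {X Ω : Type*} (ω : Ω) (w : MWsub X Ω) : MWsub X Ω :=
  ⟨Pop ω w.1, IsMW.op ω w.2⟩

/-- The natural map `j_X : X → W(X,Ω)`. -/
def jMW {X Ω : Type*} (x : X) : MWsub X Ω :=
  ⟨FreeMonoid.of (Sum.inl x), IsMW.letter x⟩

/-! Read a word from right to left as a program acting on a stack of elements of a monoid `M`: a
letter `x` multiplies the top entry on the left by `f x`, a right bracket pushes `1`, and a left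
bracket `⌊_ω` replaces the two top entries `a, b` by `β ω a * b`. A Motzkin word closes every
bracket it opens, so its whole effect is to multiply the top entry on the left by one element of
`M`. That element is the value of the word, and it exhibits `W(X,Ω)` as the free `Ω`-operated
monoid on `X`; adjunction with the monoid algebra does the rest. -/

namespace MWsub

variable {X Ω M : Type*} [Monoid M]

section StackAction

variable (β : Ω → M → M) (f : X → M)

/-- The action of words on stacks by which Motzkin words are evaluated. A stack is an infinite
stream, so that popping is total, and a word is read from right to left, so that the action is a
left action. -/
def stackAction : FreeMonoid (X ⊕ (Ω ⊕ Ω)) →* Function.End (Stream' M) :=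
  FreeMonoid.lift <| Sum.elim
    (fun x s => Stream'.cons (f x * s.head) s.tail)
    (Sum.elim (fun ω s => Stream'.cons (β ω s.head * s.tail.head) s.tail.tail)
      (fun _ s => Stream'.cons 1 s))

theorem stackAction_one (s : Stream' M) : stackAction β f 1 s = s :=
  congrFun (map_one (stackAction β f)) s

theorem stackAction_mul (u v : FreeMonoid (X ⊕ (Ω ⊕ Ω))) (s : Stream' M) :
    stackAction β f (u * v) s = stackAction β f u (stackAction β f v s) :=
  congrFun (map_mul (stackAction β f) u v) s

theorem stackAction_letter (x : X) (s : Stream' M) :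
    stackAction β f (FreeMonoid.of (Sum.inl x)) s = Stream'.cons (f x * s.head) s.tail :=
  congrFun (FreeMonoid.lift_eval_of (M := Function.End (Stream' M)) _ _) s

theorem stackAction_lbr (ω : Ω) (s : Stream' M) :
    stackAction β f (lbr ω) s = Stream'.cons (β ω s.head * s.tail.head) s.tail.tail :=
  congrFun (FreeMonoid.lift_eval_of (M := Function.End (Stream' M)) _ _) s

theorem stackAction_rbr (ω : Ω) (s : Stream' M) :
    stackAction β f (rbr ω) s = Stream'.cons 1 s :=
  congrFun (FreeMonoid.lift_eval_of (M := Function.End (Stream' M)) _ _) s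

/-- `HasValue β f w c` says that the word `w` acts on every stack by multiplying its top entry
on the left by `c`; then `c` is the value of `w` in the monoid `M` with operators `β`. -/
def HasValue (w : FreeMonoid (X ⊕ (Ω ⊕ Ω))) (c : M) : Prop :=
  ∀ s : Stream' M, stackAction β f w s = Stream'.cons (c * s.head) s.tail

theorem hasValue_one : HasValue β f 1 1 := fun s => by
  rw [stackAction_one, one_mul, Stream'.eta]

theorem hasValue_letter (x : X) : HasValue β f (FreeMonoid.of (Sum.inl x)) (f x) :=
  stackAction_letter β f x

variable {β f}

theorem HasValue.mul {u v : FreeMonoid (X ⊕ (Ω ⊕ Ω))} {c d : M}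
    (hu : HasValue β f u c) (hv : HasValue β f v d) : HasValue β f (u * v) (c * d) := fun s => by
  rw [stackAction_mul, hv, hu, Stream'.head_cons, Stream'.tail_cons, mul_assoc]

theorem HasValue.op (ω : Ω) {w : FreeMonoid (X ⊕ (Ω ⊕ Ω))} {c : M}
    (hw : HasValue β f w c) : HasValue β f (Pop ω w) (β ω c) := fun s => by
  rw [Pop, stackAction_mul, stackAction_mul, stackAction_rbr, hw, stackAction_lbr]
  simp only [Stream'.head_cons, Stream'.tail_cons, mul_one]

variable (β f) in
theorem exists_hasValue {w : FreeMonoid (X ⊕ (Ω ⊕ Ω))} (hw : IsMW X Ω w) :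
    ∃ c, HasValue β f w c := by
  induction hw with
  | one => exact ⟨1, hasValue_one β f⟩
  | letter x => exact ⟨f x, hasValue_letter β f x⟩
  | mul _ _ ihu ihv =>
    obtain ⟨c, hc⟩ := ihu
    obtain ⟨d, hd⟩ := ihv
    exact ⟨c * d, hc.mul hd⟩
  | op ω _ ih =>
    obtain ⟨c, hc⟩ := ih
    exact ⟨β ω c, hc.op ω⟩

variable (β f) in
/-- The value of a word, read off from the top of the stack after running the word on the stack
with all entries `1`. It is meaningful for Motzkin words only. -/
def eval (w : FreeMonoid (X ⊕ (Ω ⊕ Ω))) : M :=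
  (stackAction β f w (Stream'.const 1)).head

theorem HasValue.eval_eq {w : FreeMonoid (X ⊕ (Ω ⊕ Ω))} {c : M}
    (hw : HasValue β f w c) : eval β f w = c := by
  rw [eval, hw, Stream'.head_cons]
  exact mul_one c

variable (β f)

theorem hasValue_eval {w : FreeMonoid (X ⊕ (Ω ⊕ Ω))} (hw : IsMW X Ω w) :
    HasValue β f w (eval β f w) := by
  obtain ⟨c, hc⟩ := exists_hasValue β f hw
  rwa [hc.eval_eq]

/-- The homomorphism of `Ω`-operated monoids from `W(X,Ω)` to `(M, β)` that extends `f`. -/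
def lift : MWsub X Ω →* M where
  toFun w := eval β f w
  map_one' := (hasValue_one β f).eval_eq
  map_mul' u v := ((hasValue_eval β f u.2).mul (hasValue_eval β f v.2)).eval_eq

theorem lift_jMW (x : X) : lift β f (jMW x) = f x :=
  (hasValue_letter β f x).eval_eq

theorem lift_popSub (ω : Ω) (w : MWsub X Ω) : lift β f (PopSub ω w) = β ω (lift β f w) :=
  ((hasValue_eval β f w.2).op ω).eval_eq

end StackAction

@[elab_as_elim]
theorem induction_on {p : MWsub X Ω → Prop} (w : MWsub X Ω) (one : p 1)
    (letter : ∀ x, p (jMW x)) (mul : ∀ u v, p u → p v → p (u * v))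
    (op : ∀ ω u, p u → p (PopSub ω u)) : p w := by
  obtain ⟨w, hw⟩ := w
  induction hw with
  | one => exact one
  | letter x => exact letter x
  | mul hu hv ihu ihv => exact mul ⟨_, hu⟩ ⟨_, hv⟩ ihu ihv
  | op ω hu ih => exact op ω ⟨_, hu⟩ ih

theorem hom_ext {β : Ω → M → M} {φ ψ : MWsub X Ω →* M}
    (hφ : ∀ ω w, φ (PopSub ω w) = β ω (φ w)) (hψ : ∀ ω w, ψ (PopSub ω w) = β ω (ψ w))
    (h : ∀ x, φ (jMW x) = ψ (jMW x)) : φ = ψ := by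
  ext w
  induction w using induction_on with
  | one => rw [map_one, map_one]
  | letter x => exact h x
  | mul u v ihu ihv => rw [map_mul, map_mul, ihu, ihv]
  | op ω u ih => rw [hφ, hψ, ih]

theorem existsUnique_monoidHom (β : Ω → M → M) (f : X → M) :
    ∃! φ : MWsub X Ω →* M,
      (∀ x, φ (jMW x) = f x) ∧ ∀ ω w, φ (PopSub ω w) = β ω (φ w) :=
  ⟨lift β f, ⟨lift_jMW β f, lift_popSub β f⟩, fun _ hψ =>
    hom_ext hψ.2 (lift_popSub β f) fun x => (hψ.1 x).trans (lift_jMW β f x).symm⟩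

end MWsub

theorem monoidAlgebra_motzkinWords_free_operated_algebra_general
    (k : Type*) [CommSemiring k] {X Ω A : Type*} [Semiring A] [Algebra k A]
    (β : Ω → A → A) (f : X → A) :
    ∃! φ : MonoidAlgebra k (MWsub X Ω) →ₐ[k] A,
      (∀ x, φ (MonoidAlgebra.of k (MWsub X Ω) (jMW x)) = f x) ∧
      ∀ ω w, φ (MonoidAlgebra.of k (MWsub X Ω) (PopSub ω w)) =
        β ω (φ (MonoidAlgebra.of k (MWsub X Ω) w)) := by
  rw [(MonoidAlgebra.lift k A (MWsub X Ω)).bijective.existsUnique_iff]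
  simpa only [MonoidAlgebra.lift_of] using MWsub.existsUnique_monoidHom β f

/-- The monoid algebra `k[W(X,Ω)]` is the free `Ω`-operated unital `k`-algebra on `X`:
for every associative unital `k`-algebra `A`, family of `k`-linear maps `β_ω : A → A` and
map `f : X → A`, there is a unique `k`-algebra homomorphism `φ : k[W(X,Ω)] → A` with
`φ x = f x` for all `x ∈ X` and `φ (P_ω w) = β_ω (φ w)` for all `w ∈ W(X,Ω)`, `ω ∈ Ω`
(elements of `W(X,Ω)` being viewed as basis elements of `k[W(X,Ω)]`). -/
theorem monoidAlgebra_motzkinWords_free_operated_algebra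
    (k : Type*) [CommRing k] (X Ω : Type*) [Nonempty X] [Nonempty Ω]
    (A : Type*) [Semiring A] [Algebra k A] (β : Ω → A →ₗ[k] A) (f : X → A) :
    ∃! φ : MonoidAlgebra k ↥(MWsub X Ω) →ₐ[k] A,
      (∀ x : X, φ (MonoidAlgebra.of k ↥(MWsub X Ω) (jMW x)) = f x) ∧
      ∀ (ω : Ω) (w : MWsub X Ω),
        φ (MonoidAlgebra.of k ↥(MWsub X Ω) (PopSub ω w)) =
          β ω (φ (MonoidAlgebra.of k ↥(MWsub X Ω) w)) :=
  monoidAlgebra_motzkinWords_free_operated_algebra_general k (fun ω => β ω) f
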